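/- arXiv:1404.6048 — 7 statements merged into one kernel-verified Lean document; each statement's English description precedes it below -/
import Mathlib

section
/- Roots of the interpolation polynomial: Let c^(i) = (f^(i)(g_0),…,f^(i)(g_{n−1})) for linearized polynomials f^(i) with deg_q f^(i) < k^(i), let r^(i) = c^(i) + e^(i) for i = 1,…,s, and assume the s×n matrix over 𝔽_{q^m} with rows e^(1),…,e^(s) has rank t ≤ τ, where τ is a nonnegative integer with (s+1)·τ < s·n − Σ_{i=1}^s k^(i) + s. Let Q_0, Q_1, …, Q_s be linearized polynomials over 𝔽_{q^m}, not all zero, with deg_q Q_0 < n−τ and deg_q Q_i < n−τ−k^(i)+1 for i = 1,…,s (where Q_i = 0 if n−τ−k^(i)+1 ≤ 0), satisfying Q_0(g_j) + Σ_{i=1}^s Q_i(r^(i)_j) = 0 for all j = 0,…,n−1. Then F(x) := Q_0(x) + Σ_{i=1}^s Q_i(f^(i)(x)) is the zero polynomial. -/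
/-!
Write `F` for the coefficient sequence of `Q₀ + ∑ᵢ Qᵢ ∘ f⁽ⁱ⁾`. The degree bounds on the `Qᵢ` and the
`f⁽ⁱ⁾` force `F` to vanish from index `n - τ` on (`qComp_eq_zero_of_le`).

On the other hand `F` has many roots. Linearized polynomials act `𝔽_q`-linearly (`qMap`), so for every
`v ∈ 𝔽_q ^ n` that is killed by the error matrix, the `v`-combination of the `n` interpolation
conditions says exactly that `F` vanishes at `∑ⱼ vⱼ gⱼ`: the error terms cancel, and evaluation turns
`qComp` into composition (`qEval_qComp`). By rank-nullity these `v` form a space of dimension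
`n - t ≥ n - τ` (`card_ker_ge`), and distinct `v` give distinct roots because the `gⱼ` are independent.

A nonzero linearized polynomial of `q`-degree less than `n - τ` is an ordinary polynomial of degree
less than `q ^ (n - τ)`, so it cannot have `q ^ (n - τ)` roots (`coeff_eq_zero_of_roots`).
-/

/-- Evaluation of the linearized polynomial with coefficient sequence `c`
(finitely supported) at `x`: `∑ i, c i * x ^ (q ^ i)`. -/
noncomputable def qEval {K : Type*} [Field K] (q : ℕ) (c : ℕ → K) (x : K) : K :=
  ∑ᶠ i, c i * x ^ q ^ i

/-- Coefficients of the composition `b ∘ a` of linearized polynomials: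
the coefficient of `x ^ (q ^ l)` in `b(a(x))`. -/
noncomputable def qComp {K : Type*} [Field K] (q : ℕ) (b a : ℕ → K) (l : ℕ) : K :=
  ∑ i ∈ Finset.range (l + 1), b i * (a (l - i)) ^ q ^ i

/-- The `𝔽_q`-rank of a matrix over the extension field `K`: the `𝔽_q`-dimension of the
`𝔽_q`-span of its columns (equivalently, the `𝔽_q`-rank of its expansion). -/
noncomputable def rankFq (Fq : Type*) {K : Type*} [Field Fq] [Field K] [Algebra Fq K]
    {s n : ℕ} (E : Matrix (Fin s) (Fin n) K) : ℕ :=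
  Module.finrank Fq (Submodule.span Fq (Set.range fun j : Fin n => fun i : Fin s => E i j))

theorem qEval_eq_sum {K : Type*} [Field K] (q B : ℕ) (c : ℕ → K) (hc : ∀ i, B ≤ i → c i = 0)
    (x : K) : qEval q c x = ∑ i ∈ Finset.range B, c i * x ^ q ^ i := by
  unfold qEval
  apply finsum_eq_sum_of_support_subset
  intro i hi
  simp only [Finset.coe_range, Set.mem_Iio]
  by_contra! h
  exact hi (by simp [hc i h])

/-- The `𝔽_q`-linear map induced by the linearized polynomial with coefficients
`c 0, …, c (B - 1)`, written as a combination of powers of the `q`-Frobenius. -/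
noncomputable def qMap (Fq : Type*) {K : Type*} [Field Fq] [Fintype Fq] [Field K] [Algebra Fq K]
    (B : ℕ) (c : ℕ → K) : K →ₗ[Fq] K :=
  ∑ i ∈ Finset.range B, c i • ((FiniteField.frobeniusAlgHom Fq K) ^ i).toLinearMap

theorem frobeniusAlgHom_pow_apply (Fq : Type*) {K : Type*} [Field Fq] [Fintype Fq] [Field K]
    [Algebra Fq K] (i : ℕ) (x : K) :
    ((FiniteField.frobeniusAlgHom Fq K) ^ i) x = x ^ Fintype.card Fq ^ i := by
  induction i generalizing x with
  | zero => simp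
  | succ i ih => rw [pow_succ, AlgHom.mul_apply, ih]; simp [← pow_mul, pow_succ']

theorem qMap_apply (Fq : Type*) {K : Type*} [Field Fq] [Fintype Fq] [Field K]
    [Algebra Fq K] (B : ℕ) (c : ℕ → K) (hc : ∀ i, B ≤ i → c i = 0) (x : K) :
    qMap Fq B c x = qEval (Fintype.card Fq) c x := by
  rw [qEval_eq_sum _ B c hc]
  simp [qMap, LinearMap.sum_apply, frobeniusAlgHom_pow_apply]

/-- `q`-degrees add under composition; `A` and `B` are strict bounds for the degrees of the factors,
so the composition has degree at most `A + B - 2`. -/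
theorem qComp_eq_zero_of_le {K : Type*} [Field K] {q : ℕ} (hq : q ≠ 0) {A B l : ℕ}
    {b a : ℕ → K} (hb : ∀ i, A ≤ i → b i = 0) (ha : ∀ i, B ≤ i → a i = 0)
    (hl : A + B ≤ l + 1) : qComp q b a l = 0 := by
  unfold qComp
  refine Finset.sum_eq_zero fun i _ => ?_
  rcases le_or_gt A i with h | h
  · simp [hb i h]
  · rw [ha (l - i) (by omega), zero_pow (pow_ne_zero _ hq), mul_zero]

/-- Evaluation turns `qComp` into composition: expanding the outer polynomial with the additivity of
the `q`-Frobenius gives a double sum, which `qComp` collects along the diagonals `i + j = l`. -/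
theorem qEval_qComp (Fq : Type*) {K : Type*} [Field Fq] [Fintype Fq] [Field K]
    [Algebra Fq K] {A B : ℕ} {b a : ℕ → K} (hb : ∀ i, A ≤ i → b i = 0)
    (ha : ∀ i, B ≤ i → a i = 0) (x : K) :
    qEval (Fintype.card Fq) (qComp (Fintype.card Fq) b a) x =
      qEval (Fintype.card Fq) b (qEval (Fintype.card Fq) a x) := by
  set q := Fintype.card Fq with hqdef
  have hq : q ≠ 0 := Fintype.card_ne_zero
  rw [qEval_eq_sum q (A + B) _
      (fun l hl => qComp_eq_zero_of_le hq hb ha (by omega)) x,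
    qEval_eq_sum q (A + B) b (fun i hi => hb i (by omega)), qEval_eq_sum q B a ha]
  have h1 : ∀ l, qComp q b a l * x ^ q ^ l = ∑ i ∈ Finset.range (l + 1),
      (fun i j => b i * a j ^ q ^ i * x ^ q ^ (i + j)) i (l - i) := by
    intro l
    unfold qComp
    rw [Finset.sum_mul]
    refine Finset.sum_congr rfl fun i hi => ?_
    have : i + (l - i) = l := by have := Finset.mem_range.1 hi; omega
    simp only [this]
  rw [Finset.sum_congr rfl fun l _ => h1 l,
    Finset.sum_range_diag_flip (A + B) fun i j => b i * a j ^ q ^ i * x ^ q ^ (i + j)]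
  refine Finset.sum_congr rfl fun i _ => ?_
  rcases le_or_gt A i with h | h
  · simp [hb i h]
  · rw [hqdef, ← frobeniusAlgHom_pow_apply Fq i, map_sum, Finset.mul_sum]
    symm
    apply Finset.sum_subset_zero_on_sdiff
    · exact Finset.range_subset_range.2 (by omega)
    · intro j hj
      have hj' : B ≤ j := by simpa using (Finset.mem_sdiff.1 hj).2
      simp [ha j hj', zero_pow (pow_ne_zero i hq)]
    · intro j _
      rw [frobeniusAlgHom_pow_apply, ← hqdef, mul_pow, ← pow_mul, ← pow_add, add_comm j i, mul_assoc]

/-- A linearized polynomial of `q`-degree less than `N` with at least `q ^ N` roots is zero. -/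
theorem coeff_eq_zero_of_roots {K : Type*} [Field K] {q N : ℕ} (hq : 1 < q) {F : ℕ → K}
    (hF : ∀ l, N ≤ l → F l = 0) (S : Finset K) (hS : q ^ N ≤ S.card)
    (hroot : ∀ x ∈ S, qEval q F x = 0) (l : ℕ) : F l = 0 := by
  rcases le_or_gt N l with h | h
  · exact hF l h
  let P : Polynomial K :=
    ∑ i ∈ Finset.range N, Polynomial.C (F i) * Polynomial.X ^ q ^ i
  have hdeg : P.degree < S.card := by
    refine lt_of_lt_of_le ?_ (Nat.cast_le.2 hS)
    refine (Polynomial.degree_sum_le _ _).trans_lt ?_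
    rw [Finset.sup_lt_iff (WithBot.bot_lt_coe _)]
    intro i hi
    refine (Polynomial.degree_C_mul_X_pow_le _ _).trans_lt ?_
    exact Nat.cast_lt.2 (Nat.pow_lt_pow_right hq (Finset.mem_range.1 hi))
  have hP : P = 0 := by
    refine Polynomial.eq_zero_of_degree_lt_of_eval_finset_eq_zero S hdeg fun x hx => ?_
    rw [← hroot x hx, qEval_eq_sum q N F hF]
    simp [P, Polynomial.eval_finsetSum]
  have hc : P.coeff (q ^ l) = F l := by
    simp only [P, Polynomial.finsetSum_coeff, Polynomial.coeff_C_mul_X_pow]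
    rw [Finset.sum_eq_single l]
    · simp
    · intro i _ hil
      rw [if_neg]
      exact fun h => hil (Nat.pow_right_injective hq h).symm
    · intro h'; exact absurd (Finset.mem_range.2 h) h'
  rw [← hc, hP, Polynomial.coeff_zero]

/-- Rank-nullity for the error matrix: at least `q ^ (n - τ)` coefficient vectors over `𝔽_q` are
killed by it. -/
theorem card_ker_ge (Fq : Type*) {K : Type*} [Field Fq] [Fintype Fq] [Field K]
    [Algebra Fq K] {s n τ : ℕ} (e : Fin s → Fin n → K)
    (h : rankFq Fq (Matrix.of fun i j => e i j) ≤ τ) :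
    Fintype.card Fq ^ (n - τ) ≤ Nat.card
      (LinearMap.ker (Fintype.linearCombination Fq fun j : Fin n => fun i : Fin s => e i j)) := by
  have h1 := LinearMap.finrank_range_add_finrank_ker
    (Fintype.linearCombination Fq fun j : Fin n => fun i : Fin s => e i j)
  rw [Fintype.range_linearCombination, Module.finrank_fin_fun] at h1
  change Module.finrank Fq
    (Submodule.span Fq (Set.range fun j : Fin n => fun i : Fin s => e i j)) ≤ τ at h
  rw [Module.natCard_eq_pow_finrank (K := Fq), Nat.card_eq_fintype_card]
  exact Nat.pow_le_pow_right Fintype.card_pos (by omega)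

theorem roots_of_interpolation_polynomial
    (Fq K : Type) [Field Fq] [Fintype Fq] [Field K] [Fintype K] [Algebra Fq K]
    (q m n s : ℕ) (hq : q = Fintype.card Fq) (hm : Module.finrank Fq K = m) (hnm : n ≤ m)
    (g : Fin n → K) (hg : LinearIndependent Fq g)
    (k : Fin s → ℕ) (hk : ∀ i, k i ≤ n)
    (f : Fin s → ℕ → K) (hf : ∀ i j, k i ≤ j → f i j = 0)
    (e r : Fin s → Fin n → K)
    (hr : ∀ i j, r i j = qEval q (f i) (g j) + e i j)
    (t τ : ℕ) (ht : rankFq Fq (Matrix.of fun i j => e i j) = t) (htτ : t ≤ τ)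
    (hτ : (s + 1) * τ + ∑ i, k i < s * n + s)
    (Q0 : ℕ → K) (Q : Fin s → ℕ → K)
    (hQ0deg : ∀ j : ℕ, (n : ℤ) - τ ≤ (j : ℤ) → Q0 j = 0)
    (hQdeg : ∀ i, ∀ j : ℕ, (n : ℤ) - τ - k i + 1 ≤ (j : ℤ) → Q i j = 0)
    (hQne : Q0 ≠ 0 ∨ ∃ i, Q i ≠ 0)
    (hint : ∀ j, qEval q Q0 (g j) + ∑ i, qEval q (Q i) (r i j) = 0) :
    ∀ l, Q0 l + ∑ i, qComp q (Q i) (f i) l = 0 := by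
  subst hq
  set q := Fintype.card Fq with hqdef
  have hq1 : 1 < q := Fintype.one_lt_card
  have hq0 : q ≠ 0 := by omega
  have hQ0' : ∀ j, n - τ ≤ j → Q0 j = 0 := fun j hj => hQ0deg j (by omega)
  have hQ0'' : ∀ j, n + 1 ≤ j → Q0 j = 0 := fun j hj => hQ0deg j (by omega)
  have hQ' : ∀ i j, n + 1 ≤ j → Q i j = 0 := fun i j hj => hQdeg i j (by omega)
  have hf' : ∀ i j, n + 1 ≤ j → f i j = 0 := fun i j hj => hf i j (by have := hk i; omega)
  set F : ℕ → K := fun l => Q0 l + ∑ i, qComp q (Q i) (f i) l with hFdef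
  have hF : ∀ l, n - τ ≤ l → F l = 0 := by
    intro l hl
    simp only [hFdef, hQ0' l hl, zero_add]
    refine Finset.sum_eq_zero fun i _ => ?_
    rcases Nat.lt_or_ge n (τ + k i) with hlt | hge
    · -- Here the degree bound is at most `0`, so `Qᵢ = 0`.
      have hQi : ∀ j, Q i j = 0 := fun j => hQdeg i j (by omega)
      simp [qComp, hQi]
    · exact qComp_eq_zero_of_le (A := n - τ - k i + 1) (B := k i) hq0
        (fun j hj => hQdeg i j (by omega)) (hf i) (by omega)
  have hFeval : ∀ x, qEval q F x =
      qEval q Q0 x + ∑ i, qEval q (Q i) (qEval q (f i) x) := by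
    intro x
    have hc : ∀ i l, 2 * n + 2 ≤ l → qComp q (Q i) (f i) l = 0 := fun i l hl =>
      qComp_eq_zero_of_le (A := n + 1) (B := n + 1) hq0 (hQ' i) (hf' i) (by omega)
    rw [qEval_eq_sum q (2 * n + 2) F (fun l hl => hF l (by omega)),
      qEval_eq_sum q (2 * n + 2) Q0 (fun l hl => hQ0'' l (by omega))]
    have hcomp : ∀ i, qEval q (Q i) (qEval q (f i) x) =
        ∑ l ∈ Finset.range (2 * n + 2), qComp q (Q i) (f i) l * x ^ q ^ l := fun i =>
      (qEval_qComp Fq (hQ' i) (hf' i) x).symm.trans (qEval_eq_sum q _ _ (hc i) x)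
    simp_rw [hcomp]
    rw [Finset.sum_comm, ← Finset.sum_add_distrib]
    refine Finset.sum_congr rfl fun l _ => ?_
    simp only [hFdef, add_mul, Finset.sum_mul]
  let V := LinearMap.ker (Fintype.linearCombination Fq fun j : Fin n => fun i : Fin s => e i j)
  have hcard : q ^ (n - τ) ≤ Nat.card V := card_ker_ge Fq e (ht.trans_le htτ)
  have hinj : Function.Injective fun v : V => ∑ j, v.1 j • g j := by
    intro v w hvw
    exact Subtype.ext (Fintype.linearIndependent_iffₛ.1 hg v.1 w.1 hvw |> funext)
  have hroot : ∀ v : V, qEval q F (∑ j, v.1 j • g j) = 0 := by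
    intro v
    have hv : ∀ i, ∑ j, v.1 j • e i j = 0 := by
      intro i
      have := congrFun (LinearMap.mem_ker.1 v.2) i
      simpa only [Fintype.linearCombination_apply, Finset.sum_apply, Pi.smul_apply,
        Pi.zero_apply] using this
    have hr' : ∀ i, qEval q (f i) (∑ j, v.1 j • g j) = ∑ j, v.1 j • r i j := by
      intro i
      simp_rw [hr, smul_add, Finset.sum_add_distrib, hv i, add_zero, hqdef,
        ← qMap_apply Fq (n + 1) (f i) (hf' i), map_sum, map_smul]
    rw [hFeval]
    simp_rw [hr']
    simp_rw [hqdef, ← qMap_apply Fq (n + 1) _ hQ0'', ← qMap_apply Fq (n + 1) _ (hQ' _),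
      map_sum, map_smul]
    rw [Finset.sum_comm, ← Finset.sum_add_distrib]
    refine Finset.sum_eq_zero fun j _ => ?_
    rw [← Finset.smul_sum, ← smul_add]
    simp_rw [qMap_apply Fq (n + 1) _ hQ0'', qMap_apply Fq (n + 1) _ (hQ' _)]
    rw [hint j, smul_zero]
  classical
  refine coeff_eq_zero_of_roots hq1 hF (Set.range fun v : V => ∑ j, v.1 j • g j).toFinset ?_ ?_
  · rw [Set.toFinset_card, ← Nat.card_eq_fintype_card, Nat.card_range_of_injective hinj]
    exact hcard
  · intro x hx
    obtain ⟨v, rfl⟩ := Set.mem_toFinset.1 hx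
    exact hroot v
end

section
/- Existence of a nonzero interpolation polynomial: Let r^(1),…,r^(s) ∈ 𝔽_{q^m}^n and let τ, k^(1),…,k^(s) be nonnegative integers with τ + k^(i) ≤ n for all i and (s+1)·τ < s·n − Σ_{i=1}^s k^(i) + s. Then there exist linearized polynomials Q_0, Q_1, …, Q_s over 𝔽_{q^m}, not all zero, with deg_q Q_0 < n−τ and deg_q Q_i < n−τ−k^(i)+1 for i = 1,…,s, such that Q_0(g_j) + Σ_{i=1}^s Q_i(r^(i)_j) = 0 for all j = 0,…,n−1. -/
/-- The coefficient sequence obtained from `N` coefficients by padding with zeros. -/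
def padZero {K : Type*} [Field K] {N : ℕ} (c : Fin N → K) (j : ℕ) : K :=
  if h : j < N then c ⟨j, h⟩ else 0

lemma padZero_of_le {K : Type*} [Field K] {N : ℕ} (c : Fin N → K) {j : ℕ} (h : N ≤ j) :
    padZero c j = 0 := by
  simp [padZero, h]

lemma padZero_coe {K : Type*} [Field K] {N : ℕ} (c : Fin N → K) (j : Fin N) :
    padZero c j = c j := by
  simp [padZero]

lemma qEval_padZero {K : Type*} [Field K] (q : ℕ) {N : ℕ} (c : Fin N → K) (x : K) :
    qEval q (padZero c) x = ∑ j, c j * x ^ q ^ (j : ℕ) := by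
  have hsupp : (Function.support fun j => padZero c j * x ^ q ^ j) ⊆ ↑(Finset.range N) := by
    intro j hj
    by_contra hN
    exact hj (by simp [padZero_of_le c (by simpa using hN)])
  rw [qEval, finsum_eq_sum_of_support_subset _ hsupp, Finset.sum_range]
  simp only [padZero_coe]

theorem exists_nonzero_interpolation_polynomial
    (Fq K : Type) [Field Fq] [Fintype Fq] [Field K] [Fintype K] [Algebra Fq K]
    (q m n s : ℕ) (hq : q = Fintype.card Fq) (hm : Module.finrank Fq K = m) (hnm : n ≤ m)
    (g : Fin n → K) (hg : LinearIndependent Fq g)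
    (k : Fin s → ℕ) (τ : ℕ) (hτk : ∀ i, τ + k i ≤ n)
    (hτ : (s + 1) * τ + ∑ i, k i < s * n + s)
    (r : Fin s → Fin n → K) :
    ∃ (Q0 : ℕ → K) (Q : Fin s → ℕ → K),
      (∀ j : ℕ, (n : ℤ) - τ ≤ (j : ℤ) → Q0 j = 0) ∧
      (∀ i, ∀ j : ℕ, (n : ℤ) - τ - k i + 1 ≤ (j : ℤ) → Q i j = 0) ∧
      (Q0 ≠ 0 ∨ ∃ i, Q i ≠ 0) ∧
      (∀ j, qEval q Q0 (g j) + ∑ i, qEval q (Q i) (r i j) = 0) := by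
    -- `hτ` rules out `s = 0`, and then `hτk` gives `τ ≤ n`.
  have hτn : τ ≤ n := by
    rcases Nat.eq_zero_or_pos s with rfl | hs
    · simp at hτ
    · exact (Nat.le_add_right _ _).trans (hτk ⟨0, hs⟩)
  let ι := Fin (n - τ) ⊕ (Σ i : Fin s, Fin (n - τ - k i + 1))
  let v : ι → Fin n → K :=
    Sum.elim (fun a j => g j ^ q ^ (a : ℕ)) (fun p j => r p.1 j ^ q ^ (p.2 : ℕ))
  have hcard : n < Fintype.card ι := by
    have h1 : Fintype.card ι = (n - τ) + ∑ i, (n - τ - k i + 1) := by simp [ι]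
    have h2 : ∑ i, (n - τ - k i + 1) + (s * τ + ∑ i, k i) = s * n + s := by
      have h3 : ∀ i, n - τ - k i + 1 + (τ + k i) = n + 1 := fun i => by
        have := hτk i
        omega
      calc _ = ∑ i, (n - τ - k i + 1 + (τ + k i)) := by
            simp [Finset.sum_add_distrib]
        _ = s * n + s := by simp [h3, mul_add]
    rw [add_mul] at hτ
    omega
  have hdep : ¬ LinearIndependent K v := fun h => by
    have := h.fintype_card_le_finrank
    simp only [Module.finrank_fin_fun] at this
    omega
  obtain ⟨c, hc, a, ha⟩ := Fintype.not_linearIndependent_iff.mp hdep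
  refine ⟨padZero fun j => c (.inl j), fun i => padZero fun j => c (.inr ⟨i, j⟩), ?_, ?_, ?_, ?_⟩
  · exact fun j hj => padZero_of_le _ (by omega)
  · exact fun i j hj => padZero_of_le _ (by have := hτk i; omega)
  · rcases a with a | ⟨i, a⟩
    · exact .inl fun h =>
        ha ((padZero_coe (fun j => c (.inl j)) a).symm.trans (congrFun h a))
    · exact .inr ⟨i, fun h =>
        ha ((padZero_coe (fun j => c (.inr ⟨i, j⟩)) a).symm.trans (congrFun h a))⟩
  · intro j
    simp only [qEval_padZero]
    have := congrFun hc j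
    simpa [ι, v, Fintype.sum_sum_type, Fintype.sum_sigma] using this
end

section
/- Counting low-rank matrices over 𝔽_q: For positive integers a, b and an integer τ with 0 ≤ τ ≤ min(a,b), the number of a×b matrices over 𝔽_q of rank at most τ is less than 4·q^{(a+b)·τ − τ²}. -/
/-!
A matrix `M` of size `a × b` and rank at most `τ` factors as `M = U * V` through `Fq ^ τ`, where
`U` has a left inverse: enlarge the column space of `M` to a subspace of dimension exactly `τ`
(possible as `τ ≤ a`) and let the columns of `U` be a basis of it. For `G ∈ GL_τ(Fq)` the pair
`(U * G, G⁻¹ * V)` has the same product, and distinct `G` give distinct pairs because `U` is left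
cancellable. So the number `N` of such matrices satisfies
`N * |GL_τ(Fq)| ≤ q ^ (a * τ) * q ^ (τ * b)` (`card_mul_card_GL_le`).

It remains to see that `q ^ (τ ^ 2) < 4 * |GL_τ(Fq)|` (`pow_sq_lt_four_mul_card_GL`). As
`|GL_τ(Fq)| = q ^ (τ ^ 2) * ∏_{j = 1}^{τ} (1 - q ^ (-j))`, this follows from
`∏_{j = 1}^{n} (1 - x ^ j) ≥ 1 - x - x ^ 2 + x ^ (n + 1)` for `0 ≤ x ≤ 1` and `n ≥ 1`, whose right
side exceeds `1 / 4` when `0 < x ≤ 1 / 2`.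
-/

/-- A truncated form of Euler's pentagonal number estimate; the term `x ^ (n + 2)` makes the
induction work. -/
lemma one_sub_sub_le_prod (x : ℝ) (h0 : 0 ≤ x) (h1 : x ≤ 1) (n : ℕ) :
    1 - x - x ^ 2 + x ^ (n + 2) ≤ ∏ i ∈ Finset.range (n + 1), (1 - x ^ (i + 1)) := by
  induction n with
  | zero => simp
  | succ n ih =>
    rw [Finset.prod_range_succ]
    have hp : 0 ≤ x ^ (n + 2) := pow_nonneg h0 _
    have hle : x ^ (n + 2) ≤ x ^ 2 := pow_le_pow_of_le_one h0 h1 (by omega)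
    have hp1 : x ^ (n + 2) ≤ 1 := pow_le_one₀ h0 h1
    calc 1 - x - x ^ 2 + x ^ (n + 1 + 2)
        ≤ (1 - x - x ^ 2 + x ^ (n + 2)) * (1 - x ^ (n + 2)) := by
          have e : x ^ (n + 1 + 2) = x ^ (n + 2) * x := by ring
          rw [e]
          nlinarith [mul_nonneg hp (sub_nonneg.2 hle)]
      _ ≤ _ := mul_le_mul_of_nonneg_right ih (by linarith)

lemma quarter_lt_prod (x : ℝ) (h0 : 0 < x) (h1 : x ≤ 1 / 2) (n : ℕ) :
    1 / 4 < ∏ i ∈ Finset.range n, (1 - x ^ (i + 1)) := by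
  cases n with
  | zero => norm_num
  | succ n =>
    have h := one_sub_sub_le_prod x h0.le (by linarith) n
    have hp : 0 < x ^ (n + 2) := pow_pos h0 _
    nlinarith

lemma pow_sq_lt_four_mul_card_GL (F : Type) [Field F] [Fintype F] (n : ℕ) :
    Fintype.card F ^ (n ^ 2) < 4 * Nat.card (GL (Fin n) F) := by
  rw [Matrix.card_GL_field]
  set q := Fintype.card F with hq
  have hq2 : 2 ≤ q := Fintype.one_lt_card
  have hqR : (2 : ℝ) ≤ q := by exact_mod_cast hq2
  have hq0 : (0 : ℝ) < q := by linarith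
  have key : ((∏ i : Fin n, (q ^ n - q ^ (i : ℕ)) : ℕ) : ℝ) =
      (q : ℝ) ^ (n ^ 2) * ∏ i ∈ Finset.range n, (1 - ((q : ℝ)⁻¹) ^ (i + 1)) := by
    rw [Fin.prod_univ_eq_prod_range (fun i => q ^ n - q ^ i) n, Nat.cast_prod,
      ← Finset.prod_range_reflect (fun i => 1 - ((q : ℝ)⁻¹) ^ (i + 1)), sq n, pow_mul]
    nth_rewrite 4 [← Finset.card_range n]
    rw [← Finset.prod_const, ← Finset.prod_mul_distrib]
    refine Finset.prod_congr rfl fun i hi => ?_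
    have hi' := Finset.mem_range.1 hi
    rw [Nat.cast_sub (Nat.pow_le_pow_right (by omega) hi'.le)]
    obtain ⟨k, rfl⟩ := Nat.exists_eq_add_of_lt hi'
    have e : i + k + 1 - 1 - i + 1 = k + 1 := by omega
    rw [e]
    push_cast
    have hne : (q : ℝ) ^ (k + 1) ≠ 0 := by positivity
    rw [inv_pow, add_assoc, pow_add (q : ℝ) i (k + 1)]
    field_simp
  have hlt := quarter_lt_prod (q : ℝ)⁻¹ (inv_pos.2 hq0)
    (by rw [one_div]; exact inv_anti₀ two_pos hqR) n
  have hP : (0 : ℝ) < (q : ℝ) ^ (n ^ 2) := by positivity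
  have : ((q ^ (n ^ 2) : ℕ) : ℝ) <
      ((4 * ∏ i : Fin n, (q ^ n - q ^ (i : ℕ)) : ℕ) : ℝ) := by
    rw [Nat.cast_mul, key]
    push_cast
    nlinarith
  exact_mod_cast this

lemma exists_submodule_ge_finrank_eq {F E : Type*} [Field F] [AddCommGroup E] [Module F E]
    [FiniteDimensional F E] (W : Submodule F E) {t : ℕ} (hW : Module.finrank F W ≤ t)
    (ht : t ≤ Module.finrank F E) :
    ∃ W' : Submodule F E, W ≤ W' ∧ Module.finrank F W' = t := by
  induction t, hW using Nat.le_induction with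
  | base => exact ⟨W, le_rfl, rfl⟩
  | succ t _ ih =>
    obtain ⟨W', hle, hfr⟩ := ih (by omega)
    obtain ⟨v, hv⟩ : ∃ v, v ∉ W' := by
      by_contra! h
      have htop : W' = ⊤ := (Submodule.eq_top_iff').2 h
      rw [htop, finrank_top] at hfr
      omega
    exact ⟨W' ⊔ Submodule.span F {v}, hle.trans le_sup_left, by
      rw [Submodule.finrank_sup_span_singleton hv, hfr]⟩

/-- A matrix of rank at most `t` factors through `F ^ t` with left factor of full column rank,
expressed by a left inverse `L`. -/
lemma exists_factorization {F : Type} [Field F] {a b t : ℕ} (hta : t ≤ a)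
    (M : Matrix (Fin a) (Fin b) F) (hM : M.rank ≤ t) :
    ∃ (U : Matrix (Fin a) (Fin t) F) (V : Matrix (Fin t) (Fin b) F)
      (L : Matrix (Fin t) (Fin a) F), U * V = M ∧ L * U = 1 := by
  obtain ⟨W, hW, hWt⟩ : ∃ W : Submodule F (Fin a → F),
      LinearMap.range (Matrix.toLin' M) ≤ W ∧ Module.finrank F W = t :=
    exists_submodule_ge_finrank_eq _ hM (by simpa using hta)
  let e : (Fin t → F) ≃ₗ[F] W := LinearEquiv.ofFinrankEq _ _ (by simp [hWt])
  let u : (Fin t → F) →ₗ[F] (Fin a → F) := W.subtype ∘ₗ e.toLinearMap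
  have hu : LinearMap.ker u = ⊥ :=
    LinearMap.ker_eq_bot.2 (W.subtype_injective.comp e.injective)
  obtain ⟨l, hl⟩ := u.exists_leftInverse_of_injective hu
  let v : (Fin b → F) →ₗ[F] (Fin t → F) := e.symm.toLinearMap ∘ₗ
    (Matrix.toLin' M).codRestrict W (fun x => hW (LinearMap.mem_range_self _ x))
  refine ⟨LinearMap.toMatrix' u, LinearMap.toMatrix' v, LinearMap.toMatrix' l, ?_, ?_⟩
  · rw [← LinearMap.toMatrix'_comp]
    have huv : u ∘ₗ v = Matrix.toLin' M := by
      ext x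
      simp [u, v]
    rw [huv, LinearMap.toMatrix'_toLin']
  · rw [← LinearMap.toMatrix'_comp, hl, LinearMap.toMatrix'_id]

/-- `GL_t` acts freely on the factorizations `M = U * V` by `(U * G, G⁻¹ * V)`. -/
lemma card_mul_card_GL_le (F : Type) [Field F] [Fintype F] {a b t : ℕ} (hta : t ≤ a) :
    Nat.card {M : Matrix (Fin a) (Fin b) F // M.rank ≤ t} * Nat.card (GL (Fin t) F) ≤
      Fintype.card F ^ ((a + b) * t) := by
  choose U V L hUV hLU using
    fun M : {M : Matrix (Fin a) (Fin b) F // M.rank ≤ t} => exists_factorization hta M.1 M.2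
  let f : {M : Matrix (Fin a) (Fin b) F // M.rank ≤ t} × GL (Fin t) F →
      Matrix (Fin a) (Fin t) F × Matrix (Fin t) (Fin b) F :=
    fun p => (U p.1 * p.2.1, (p.2⁻¹).1 * V p.1)
  have hprod : ∀ p, (f p).1 * (f p).2 = p.1.1 := by
    rintro ⟨M, G⟩
    have hG : G.1 * (G⁻¹).1 = 1 := G.mul_inv
    change U M * G.1 * ((G⁻¹).1 * V M) = M.1
    rw [Matrix.mul_assoc, ← Matrix.mul_assoc G.1, hG, Matrix.one_mul, hUV]
  have hf : Function.Injective f := by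
    intro p p' h
    have h1 : p.1 = p'.1 := Subtype.ext (by rw [← hprod p, ← hprod p', h])
    obtain ⟨M, G⟩ := p
    obtain ⟨M', G'⟩ := p'
    obtain rfl : M = M' := h1
    have h2 : U M * G.1 = U M * G'.1 := congrArg Prod.fst h
    have h3 := congrArg (L M * ·) h2
    simp only [← Matrix.mul_assoc, hLU, Matrix.one_mul] at h3
    rw [Units.ext h3]
  have hcard := Nat.card_le_card_of_injective f hf
  rw [Nat.card_prod, Nat.card_prod] at hcard
  refine hcard.trans_eq ?_
  simp only [Matrix, Nat.card_fun]
  simp only [Nat.card_eq_fintype_card, Fintype.card_fin]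
  rw [← pow_mul, ← pow_mul, ← pow_add]
  congr 1
  ring

theorem count_low_rank_matrices
    (Fq : Type) [Field Fq] [Fintype Fq]
    (a b τ : ℕ) (ha : 0 < a) (hb : 0 < b) (hτ : τ ≤ min a b) :
    Nat.card {M : Matrix (Fin a) (Fin b) Fq // M.rank ≤ τ} <
      4 * Fintype.card Fq ^ ((a + b) * τ - τ ^ 2) := by
  have hτa : τ ≤ a := hτ.trans (min_le_left _ _)
  have h1 := card_mul_card_GL_le Fq (b := b) hτa
  have h2 := pow_sq_lt_four_mul_card_GL Fq τ
  -- The zero matrix makes the count positive, so strictness survives multiplication by it.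
  have hN : 0 < Nat.card {M : Matrix (Fin a) (Fin b) Fq // M.rank ≤ τ} :=
    have : Nonempty {M : Matrix (Fin a) (Fin b) Fq // M.rank ≤ τ} := ⟨⟨0, by simp⟩⟩
    Nat.card_pos
  set N := Nat.card {M : Matrix (Fin a) (Fin b) Fq // M.rank ≤ τ}
  have hexp : (a + b) * τ = ((a + b) * τ - τ ^ 2) + τ ^ 2 := by
    have : τ ^ 2 ≤ (a + b) * τ := by nlinarith
    omega
  rw [hexp, pow_add] at h1
  refine lt_of_mul_lt_mul_right (a := Fintype.card Fq ^ τ ^ 2) ?_ (Nat.zero_le _)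
  calc N * Fintype.card Fq ^ τ ^ 2 < N * (4 * Nat.card (GL (Fin τ) Fq)) :=
        Nat.mul_lt_mul_of_pos_left h2 hN
    _ = 4 * (N * Nat.card (GL (Fin τ) Fq)) := by ring
    _ ≤ _ := by rw [mul_assoc]; exact Nat.mul_le_mul_left 4 h1
end

section
/- Maximum list size of interleaved Gabidulin codes: Let τ be a nonnegative integer with τ + k^(i) ≤ n for all i and (s+1)·τ < s·n − Σ_{i=1}^s k^(i) + s. Then for every r ∈ 𝔽_{q^m}^{s×n}, the number of codewords c ∈ IGab[s; n, k^(1),…,k^(s)] with rk(r − c) ≤ τ is at most q^{m·(Σ_{i=1}^s k^(i) − min_i k^(i))}. -/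
/-- Membership in the interleaved Gabidulin code `IGab[s; n, k⁽¹⁾,…,k⁽ˢ⁾]`. -/
def IsIGabCodeword {K : Type*} [Field K] (q : ℕ) {s n : ℕ} (g : Fin n → K)
    (k : Fin s → ℕ) (C : Matrix (Fin s) (Fin n) K) : Prop :=
  ∃ f : Fin s → ℕ → K, (∀ i j, k i ≤ j → f i j = 0) ∧ ∀ i j, C i j = qEval q (f i) (g j)

open Polynomial

/-- The linearized polynomial `∑ i, c i * X ^ (q ^ i)` of `q`-degree less than `N`, as an ordinary
polynomial. -/
noncomputable def linPoly {K : Type*} [Field K] (q : ℕ) {N : ℕ} (c : Fin N → K) : K[X] :=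
  ∑ i, C (c i) * X ^ q ^ (i : ℕ)

section

variable {K : Type*} [Field K] {q : ℕ}

lemma aeval_linPoly {R : Type*} [CommRing R] [Algebra K R] {N : ℕ} (c : Fin N → K) (x : R) :
    aeval x (linPoly q c) = ∑ i, algebraMap K R (c i) * x ^ q ^ (i : ℕ) := by
  simp [linPoly]

lemma eval_linPoly {N : ℕ} (c : Fin N → K) (x : K) :
    (linPoly q c).eval x = ∑ i, c i * x ^ q ^ (i : ℕ) := by
  simp [linPoly, eval_finsetSum]

lemma qEval_eq_eval_linPoly {N : ℕ} (c : ℕ → K) (hc : ∀ j, N ≤ j → c j = 0) (x : K) :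
    qEval q c x = (linPoly q fun i : Fin N => c i).eval x := by
  rw [eval_linPoly, Fin.sum_univ_eq_sum_range (fun i => c i * x ^ q ^ i), qEval]
  apply finsum_eq_sum_of_support_subset
  intro j hj
  by_contra h
  simp only [Finset.coe_range, Set.mem_Iio, not_lt] at h
  exact hj (by simp [hc j h])

lemma linPoly_coeff (hq : 1 < q) {N : ℕ} (c : Fin N → K) (j : Fin N) :
    (linPoly q c).coeff (q ^ (j : ℕ)) = c j := by
  simp only [linPoly, finsetSum_coeff, coeff_C_mul, coeff_X_pow]
  rw [Finset.sum_eq_single j]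
  · simp
  · intro b _ hb
    have : q ^ (j : ℕ) ≠ q ^ (b : ℕ) := fun h =>
      hb (Fin.ext (Nat.pow_right_injective hq h)).symm
    simp [this]
  · simp

lemma linPoly_injective (hq : 1 < q) {N : ℕ} :
    Function.Injective (linPoly q : (Fin N → K) → K[X]) := fun c d h =>
  funext fun j => by rw [← linPoly_coeff hq c, h, linPoly_coeff hq]

lemma linPoly_zero {N : ℕ} : linPoly q (0 : Fin N → K) = 0 := by simp [linPoly]

lemma linPoly_sub {N : ℕ} (c d : Fin N → K) :
    linPoly q (c - d) = linPoly q c - linPoly q d := by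
  simp [linPoly, sub_mul, Finset.sum_sub_distrib]

lemma linPoly_coeff_zero (hq : 1 < q) {N : ℕ} (c : Fin N → K) : (linPoly q c).coeff 0 = 0 := by
  have h : ∀ i : ℕ, 0 ≠ q ^ i := fun i => (pow_pos (by omega) i).ne
  simp [linPoly, coeff_X_pow, h]

lemma natDegree_linPoly_le (hq : 1 < q) {N : ℕ} (c : Fin N → K) :
    (linPoly q c).natDegree ≤ q ^ (N - 1) := by
  refine natDegree_sum_le_of_forall_le _ _ fun i _ => (natDegree_C_mul_X_pow_le _ _).trans ?_
  exact Nat.pow_le_pow_right (by omega) (by omega)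

lemma degree_linPoly_lt (hq : 1 < q) {N : ℕ} (c : Fin N → K) :
    (linPoly q c).degree < (q ^ N : ℕ) := by
  rw [← mem_degreeLT]
  refine Submodule.sum_mem _ fun i _ => mem_degreeLT.2 ?_
  refine (degree_C_mul_X_pow_le _ _).trans_lt ?_
  exact_mod_cast Nat.pow_lt_pow_right hq i.2

/-- The `q`-degrees add up under composition, so a composition of `q`-degrees less than `a` and `k`
has `q`-degree less than `a + k - 1`. -/
lemma degree_comp_linPoly_lt (hq : 1 < q) {a k N : ℕ} (haN : a + k ≤ N + 1)
    (c : Fin a → K) (f : Fin k → K) :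
    ((linPoly q c).comp (linPoly q f)).degree < (q ^ N : ℕ) := by
  rw [comp_eq_aeval, aeval_linPoly, ← mem_degreeLT]
  refine Submodule.sum_mem _ fun i _ => mem_degreeLT.2 ?_
  -- For `k = 0` the truncated exponent `k - 1` is useless, but then the inner polynomial is `0`.
  rcases Nat.eq_zero_or_pos k with rfl | hk
  · rw [Subsingleton.elim f 0, linPoly_zero, zero_pow (pow_pos (by omega) _).ne', mul_zero,
      degree_zero]
    exact WithBot.bot_lt_coe _
  · have h1 : (algebraMap K K[X] (c i) * linPoly q f ^ q ^ (i : ℕ)).natDegree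
        ≤ q ^ (i : ℕ) * q ^ (k - 1) :=
      (natDegree_C_mul_le _ _).trans (natDegree_pow_le.trans
        (Nat.mul_le_mul_left _ (natDegree_linPoly_le hq f)))
    refine degree_le_natDegree.trans_lt ?_
    rw [← pow_add] at h1
    have h2 : q ^ ((i : ℕ) + (k - 1)) < q ^ N := Nat.pow_lt_pow_right hq (by omega)
    exact_mod_cast h1.trans_lt h2

/-- A linearized polynomial acts `𝔽_q`-linearly on every commutative `𝔽_q`-algebra, being a
combination of powers of the Frobenius. With `R = K[X]` this is the additivity of composition
on the left with a linearized polynomial. -/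
lemma exists_linearMap_aeval (Fq : Type*) [Field Fq] [Fintype Fq] (hq : q = Fintype.card Fq)
    (R : Type*) [CommRing R] [Algebra K R] [Algebra Fq R] {N : ℕ} (c : Fin N → K) :
    ∃ L : R →ₗ[Fq] R, ∀ x, L x = aeval x (linPoly q c) := by
  refine ⟨∑ i, (LinearMap.mulLeft Fq (algebraMap K R (c i))) ∘ₗ
    ((FiniteField.frobeniusAlgHom Fq R) ^ (i : ℕ)).toLinearMap, fun x => ?_⟩
  have h : ∀ i : ℕ, ((FiniteField.frobeniusAlgHom Fq R) ^ i) x = x ^ q ^ i := by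
    intro i
    induction i with
    | zero => simp
    | succ i ih =>
      rw [pow_succ', AlgHom.mul_apply, ih, FiniteField.coe_frobeniusAlgHom, ← hq, pow_succ,
        pow_mul]
  simp only [aeval_linPoly, LinearMap.sum_apply, LinearMap.comp_apply, LinearMap.mulLeft_apply,
    AlgHom.toLinearMap_apply, h]

/-- Composing a nonzero linearized polynomial after linearized polynomials is left cancellative. -/
lemma linPoly_comp_cancel (Fq : Type*) [Field Fq] [Fintype Fq] [Algebra Fq K]
    (hq : q = Fintype.card Fq) {a k : ℕ} {c : Fin a → K} (hc : c ≠ 0) {f f' : Fin k → K}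
    (h : (linPoly q c).comp (linPoly q f) = (linPoly q c).comp (linPoly q f')) : f = f' := by
  have hq1 : 1 < q := hq ▸ Fintype.one_lt_card
  obtain ⟨L, hL⟩ := exists_linearMap_aeval Fq hq K[X] c
  have h0 : (linPoly q c).comp (linPoly q (f - f')) = 0 := by
    rw [linPoly_sub, comp_eq_aeval, ← hL, map_sub, hL, hL, ← comp_eq_aeval, ← comp_eq_aeval, h,
      sub_self]
  rw [← sub_eq_zero]
  apply linPoly_injective hq1
  rw [linPoly_zero]
  rcases comp_eq_zero_iff.1 h0 with h1 | ⟨-, h1⟩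
  · exact absurd (linPoly_injective hq1 (h1.trans linPoly_zero.symm)) hc
  · rw [h1, linPoly_coeff_zero hq1, C_0]

/-- More unknown coefficients than interpolation conditions give a nonzero interpolation tuple. -/
lemma exists_interpolation {n s N : ℕ} (d : Fin s → ℕ) (hN : n < N + ∑ i, d i)
    (g : Fin n → K) (r : Matrix (Fin s) (Fin n) K) :
    ∃ (Q₀ : Fin N → K) (Q : ∀ i, Fin (d i) → K), (Q₀ ≠ 0 ∨ Q ≠ 0) ∧
      ∀ j, (linPoly q Q₀).eval (g j) + ∑ i, (linPoly q (Q i)).eval (r i j) = 0 := by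
  let Φ : ((Fin N → K) × (∀ i, Fin (d i) → K)) →ₗ[K] (Fin n → K) :=
    { toFun := fun v j => (∑ l, v.1 l * g j ^ q ^ (l : ℕ)) +
        ∑ i, ∑ l, v.2 i l * r i j ^ q ^ (l : ℕ)
      map_add' := fun v w => by
        ext j
        simp only [Prod.fst_add, Prod.snd_add, Pi.add_apply, add_mul, Finset.sum_add_distrib]
        ring
      map_smul' := fun a v => by
        ext j
        simp [mul_assoc, Finset.mul_sum, mul_add] }
  have hker : Φ.ker ≠ ⊥ := by
    apply LinearMap.ker_ne_bot_of_finrank_lt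
    simpa [Module.finrank_pi_fintype] using hN
  obtain ⟨v, hv, hv0⟩ := Submodule.exists_mem_ne_zero_of_ne_bot hker
  refine ⟨v.1, v.2, ?_, fun j => ?_⟩
  · by_contra! h
    exact hv0 (Prod.ext h.1 h.2)
  · simp only [eval_linPoly]
    exact congrFun (LinearMap.mem_ker.1 hv) j

/-- The interpolation tuple annihilates the message polynomials of every codeword close
to the received word. -/
lemma interpolation_comp_eq_zero (Fq : Type*) [Field Fq] [Fintype Fq] [Algebra Fq K]
    (hq : q = Fintype.card Fq) {n s τ : ℕ} {k d : Fin s → ℕ}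
    (hd : ∀ i, d i + k i ≤ n - τ + 1) {g : Fin n → K} (hg : LinearIndependent Fq g)
    {r c : Matrix (Fin s) (Fin n) K} (hrk : rankFq Fq (r - c) ≤ τ)
    {f : ∀ i, Fin (k i) → K} (hf : ∀ i j, c i j = (linPoly q (f i)).eval (g j))
    {Q₀ : Fin (n - τ) → K} {Q : ∀ i, Fin (d i) → K}
    (hQ : ∀ j, (linPoly q Q₀).eval (g j) + ∑ i, (linPoly q (Q i)).eval (r i j) = 0) :
    linPoly q Q₀ + ∑ i, (linPoly q (Q i)).comp (linPoly q (f i)) = 0 := by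
  classical
  have hq1 : 1 < q := hq ▸ Fintype.one_lt_card
  -- `φ` sends a vector over `𝔽_q` to the corresponding combination of the error columns.
  let φ := Fintype.linearCombination Fq (fun j : Fin n => fun i : Fin s => (r - c) i j)
  have hφ : n - τ ≤ Module.finrank Fq φ.ker := by
    have h1 := LinearMap.finrank_range_add_finrank_ker φ
    have h2 : Module.finrank Fq φ.range = rankFq Fq (r - c) := by
      rw [Fintype.range_linearCombination]
      rfl
    rw [Module.finrank_fin_fun] at h1
    omega
  let γ : φ.ker → K := fun a => Fintype.linearCombination Fq g a
  have hγ : Function.Injective γ := fun a b h =>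
    Subtype.ext (hg.fintypeLinearCombination_injective h)
  have : Fintype φ.ker := Fintype.ofFinite _
  refine eq_zero_of_degree_lt_of_eval_finset_eq_zero (Finset.univ.image γ) ?_ ?_
  · refine lt_of_lt_of_le (b := ((q ^ (n - τ) : ℕ) : WithBot ℕ)) ?_ ?_
    · rw [← mem_degreeLT]
      exact Submodule.add_mem _ (mem_degreeLT.2 (degree_linPoly_lt hq1 _))
        (Submodule.sum_mem _ fun i _ => mem_degreeLT.2 (degree_comp_linPoly_lt hq1 (hd i) _ _))
    · rw [Finset.card_image_of_injective _ hγ, Finset.card_univ,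
        Module.card_eq_pow_finrank (K := Fq), ← hq]
      exact_mod_cast Nat.pow_le_pow_right (by omega) hφ
  · intro x hx
    obtain ⟨⟨a, ha⟩, -, rfl⟩ := Finset.mem_image.1 hx
    have hL : ∀ {N : ℕ} (c : Fin N → K), ∀ y : Fin n → K,
        (linPoly q c).eval (∑ j, a j • y j) = ∑ j, a j • (linPoly q c).eval (y j) := by
      intro N c y
      obtain ⟨L, hL⟩ := exists_linearMap_aeval Fq hq K c
      simp only [coe_aeval_eq_eval] at hL
      simp [← hL]
    have hrc : ∀ i, ∑ j, a j • c i j = ∑ j, a j • r i j := by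
      intro i
      have h := congrFun (LinearMap.mem_ker.1 ha) i
      simp only [φ, Fintype.linearCombination_apply, Finset.sum_apply, Pi.smul_apply,
        Matrix.sub_apply, smul_sub, Finset.sum_sub_distrib, Pi.zero_apply] at h
      exact (sub_eq_zero.1 h).symm
    have hγa : γ ⟨a, ha⟩ = ∑ j, a j • g j := rfl
    have hf' : ∀ i, (linPoly q (f i)).eval (∑ j, a j • g j) = ∑ j, a j • r i j := by
      intro i
      rw [hL, ← hrc]
      simp only [hf]
    simp only [hγa, eval_add, eval_finsetSum, eval_comp, hf', hL]
    rw [Finset.sum_comm, ← Finset.sum_add_distrib]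
    refine Finset.sum_eq_zero fun j _ => ?_
    rw [← Finset.smul_sum, ← smul_add, hQ, smul_zero]

end

theorem maximum_list_size
    (Fq K : Type) [Field Fq] [Fintype Fq] [Field K] [Fintype K] [Algebra Fq K]
    (q m n s : ℕ) (hq : q = Fintype.card Fq) (hm : Module.finrank Fq K = m) (hnm : n ≤ m)
    (hs : 0 < s)
    (g : Fin n → K) (hg : LinearIndependent Fq g)
    (k : Fin s → ℕ) (hk : ∀ i, k i ≤ n)
    (τ : ℕ) (hτk : ∀ i, τ + k i ≤ n)
    (hτ : (s + 1) * τ + ∑ i, k i < s * n + s) :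
    ∀ r : Matrix (Fin s) (Fin n) K,
      Nat.card {c : Matrix (Fin s) (Fin n) K //
          IsIGabCodeword q g k c ∧ rankFq Fq (r - c) ≤ τ} ≤
        Fintype.card Fq ^ (m * (∑ i, k i - sInf (Set.range k))) := by
  classical
  intro r
  have hq1 : 1 < q := hq ▸ Fintype.one_lt_card
  let d : Fin s → ℕ := fun i => n - τ - k i + 1
  have hd : ∀ i, d i + k i = n - τ + 1 := fun i => by
    have := hτk i
    simp only [d]
    omega
  have hτn : τ ≤ n := le_trans (Nat.le_add_right _ _) (hτk ⟨0, hs⟩)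
  have hcount : n < (n - τ) + ∑ i, d i := by
    have h1 : ∑ i, d i + ∑ i, k i = s * (n - τ + 1) := by
      rw [← Finset.sum_add_distrib, Finset.sum_congr rfl fun i _ => hd i]
      simp
    obtain ⟨e, rfl⟩ := Nat.exists_eq_add_of_le hτn
    simp only [Nat.add_sub_cancel_left] at h1 ⊢
    nlinarith
  obtain ⟨Q₀, Q, hne, hQ⟩ := exists_interpolation (q := q) d hcount g r
  -- Message coefficients of each listed codeword, and the equation they satisfy.
  have hmsg : ∀ c : {c : Matrix (Fin s) (Fin n) K //
      IsIGabCodeword q g k c ∧ rankFq Fq (r - c) ≤ τ}, ∃ f : ∀ i, Fin (k i) → K,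
      (∀ i j, c.1 i j = (linPoly q (f i)).eval (g j)) ∧
        linPoly q Q₀ + ∑ i, (linPoly q (Q i)).comp (linPoly q (f i)) = 0 := by
    rintro ⟨c, ⟨f, hf0, hf⟩, hc⟩
    have hf' : ∀ i j, c i j = (linPoly q fun l : Fin (k i) => f i l).eval (g j) := fun i j => by
      rw [hf, qEval_eq_eval_linPoly _ (hf0 i)]
    exact ⟨fun i l => f i l, hf',
      interpolation_comp_eq_zero Fq hq (fun i => (hd i).le) hg hc hf' hQ⟩
  rcases isEmpty_or_nonempty {c : Matrix (Fin s) (Fin n) K //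
      IsIGabCodeword q g k c ∧ rankFq Fq (r - c) ≤ τ} with hemp | ⟨⟨c₀⟩⟩
  · simp
  have hQne : Q ≠ 0 := by
    rintro rfl
    obtain ⟨f, -, hf⟩ := hmsg c₀
    have hz : linPoly q Q₀ = 0 := by simpa [linPoly_zero] using hf
    exact hne.elim (fun h => h (linPoly_injective hq1 (hz.trans linPoly_zero.symm)))
      fun h => h rfl
  obtain ⟨i₀, hi₀⟩ := Function.ne_iff.1 hQne
  choose F hF hF0 using hmsg
  have hinj : Function.Injective fun c (i : {i // i ≠ i₀}) => F c i.1 := by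
    intro c c' h
    have hoff : ∀ i : {i // i ≠ i₀}, F c i = F c' i := fun i => congrFun h i
    have hcomp : (linPoly q (Q i₀)).comp (linPoly q (F c i₀)) =
        (linPoly q (Q i₀)).comp (linPoly q (F c' i₀)) := by
      have h1 := (hF0 c).trans (hF0 c').symm
      rw [Fintype.sum_eq_add_sum_subtype_ne _ i₀, Fintype.sum_eq_add_sum_subtype_ne _ i₀] at h1
      simp only [hoff] at h1
      exact add_right_cancel (add_left_cancel h1)
    have hon := linPoly_comp_cancel Fq hq hi₀ hcomp
    ext i j
    rw [hF, hF]
    by_cases hi : i = i₀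
    · subst hi
      rw [hon]
    · rw [hoff ⟨i, hi⟩]
  refine (Nat.card_le_card_of_injective _ hinj).trans ?_
  have hK : Nat.card K = Fintype.card Fq ^ m := by
    rw [Nat.card_eq_fintype_card, Module.card_eq_pow_finrank (K := Fq), hm]
  have hsum := Fintype.sum_eq_add_sum_subtype_ne k i₀
  have hmin : sInf (Set.range k) ≤ k i₀ := Nat.sInf_le ⟨i₀, rfl⟩
  have hcard : Nat.card (∀ i : {i // i ≠ i₀}, Fin (k i) → K) =
      Fintype.card Fq ^ (m * ∑ i : {i // i ≠ i₀}, k i) := by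
    simp only [Nat.card_pi, hK, Finset.prod_const, Finset.card_univ, Fintype.card_fin,
      Finset.prod_pow_eq_pow_sum, ← pow_mul, Finset.mul_sum]
  rw [hcard]
  exact Nat.pow_le_pow_right Fintype.card_pos (Nat.mul_le_mul_left _ (by omega))
end

section
/- Relation between the two known decoding matrices: Let 1 ≤ k < n ≤ m, let c^(i) = (f^(i)(g_0),…,f^(i)(g_{n−1})) with linearized f^(i) of q-degree < k, let r^(i) = c^(i) + e^(i) for i = 1,…,s, and let t be the rank of the s×n matrix over 𝔽_{q^m} with rows e^(1),…,e^(s); assume 1 ≤ t ≤ τ where τ = ⌊s·(n−k)/(s+1)⌋. Let h = (h_0,…,h_{n−1}) ∈ 𝔽_{q^m}^n have entries linearly independent over 𝔽_q and satisfy qvan_{n−k}(h)·qvan_k(g)^T = 0 (so qvan_{n−k}(h) is a parity-check matrix of Gab[n,k]). Define the syndromes s^(i) = r^(i)·qvan_{n−k}(h)^T ∈ 𝔽_{q^m}^{n−k}, and for each i let S^(i) be the (n−k−t)×(t+1) matrix over 𝔽_{q^m} with (a,b) entry (s^(i)_{n−k−1−t−a+b})^{[t−n+k+1+a]} for 0 ≤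 a ≤ n−k−t−1 and 0 ≤ b ≤ t. Let S be the vertical stack of S^(1),…,S^(s), and let R_R be the vertical stack of qvan_{n−t−1}(g), qvan_{n−k−t}(r^(1)), …, qvan_{n−k−t}(r^(s)). Then the rank of S over 𝔽_{q^m} is less than t if and only if the rank of R_R over 𝔽_{q^m} is less than n−1. -/
/-!
Kernels decide the equivalence. The rows of `qvan_{n-t-1}(g)` are linearly independent over `K`, so
their common kernel in `K^n` has dimension `t + 1`. Applying powers of Frobenius to the
parity-check relation shows that this kernel contains the `t + 1` vectors
`h^{[n-k-t-1]}, …, h^{[n-k-1]}`; these are linearly independent, hence form a basis of it. In the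
coordinates given by this basis the remaining rows `r^{(i)[a]}` of `R_R` become the matrix with
entries `⟨r^{(i)[a]}, h^{[n-k-t-1+b]}⟩`, which is `S` with the field automorphism `σ^{n-k-t-1}`
applied entrywise (`rank_map_ringEquiv` shows that this preserves the rank). So the kernels of `R_R`
and `S` have the same dimension, that is `n - rank R_R = (t + 1) - rank S`.

Both independence claims come from `moore_linearIndependent`: a nonzero linearized polynomial of
`q`-degree less than `n` cannot vanish on an `n`-dimensional `𝔽_q`-space.
-/

open Matrix

/-- The `q`-Vandermonde (Moore) matrix `qvan_s(a)`, with `(i,j)` entry `a j ^ (q ^ i)`. -/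
def moore {K : Type*} [Field K] (q : ℕ) {n : ℕ} (s : ℕ) (a : Fin n → K) :
    Matrix (Fin s) (Fin n) K :=
  Matrix.of fun i j => a j ^ q ^ (i : ℕ)

/-- A nonzero linearized polynomial of `q`-degree `< s ≤ n` has fewer than `q ^ n` roots, so it
cannot vanish on the `𝔽_q`-span of `n` independent elements; hence the rows of the Moore matrix
are linearly independent. -/
lemma moore_linearIndependent {Fq K : Type} [Field Fq] [Fintype Fq] [Field K] [Algebra Fq K]
    {n : ℕ} {a : Fin n → K} (ha : LinearIndependent Fq a) {s : ℕ} (hs : s ≤ n) :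
    LinearIndependent K (moore (Fintype.card Fq) s a).row := by
  classical
  set q := Fintype.card Fq with hq
  have hq1 : 1 < q := Fintype.one_lt_card
  rw [Fintype.linearIndependent_iff]
  intro c hc
  rcases Nat.eq_zero_or_pos s with rfl | hs0
  · exact fun i => i.elim0
  let P : Polynomial K := ∑ i : Fin s, Polynomial.C (c i) * Polynomial.X ^ q ^ (i : ℕ)
  let L : K →ₗ[Fq] K :=
    ∑ i : Fin s, (LinearMap.mulLeft Fq (c i)) ∘ₗ
      ((FiniteField.frobeniusAlgHom Fq K) ^ (i : ℕ)).toLinearMap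
  have hfrob : ∀ (i : ℕ) (x : K), ((FiniteField.frobeniusAlgHom Fq K) ^ i) x = x ^ q ^ i := by
    intro i x
    rw [AlgHom.coe_pow, FiniteField.coe_frobeniusAlgHom, pow_iterate]
  have hPL : ∀ x, P.eval x = L x := by
    intro x
    simp [P, L, Polynomial.eval_finsetSum, hfrob, -AlgHom.coe_pow]
  have hLa : ∀ j, L (a j) = 0 := by
    intro j
    have := congrFun hc j
    simpa [L, hfrob, moore, Matrix.row, -AlgHom.coe_pow] using this
  have hP : P = 0 := by
    refine Polynomial.eq_zero_of_natDegree_lt_card_of_eval_eq_zero P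
      (f := fun w : Fin n → Fq => ∑ j, w j • a j) ?_ ?_ ?_
    · exact ha.fintypeLinearCombination_injective
    · intro w
      rw [hPL, map_sum]
      simp [hLa]
    · have hdeg : P.natDegree ≤ q ^ (s - 1) := by
        refine Polynomial.natDegree_sum_le_of_forall_le _ _ fun i _ => ?_
        refine (Polynomial.natDegree_C_mul_X_pow_le _ _).trans ?_
        exact Nat.pow_le_pow_right hq1.le (by have := i.2; omega)
      refine hdeg.trans_lt ?_
      rw [Fintype.card_fun, Fintype.card_fin, ← hq]
      exact Nat.pow_lt_pow_right hq1 (by omega)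
  intro i
  have hcoef : P.coeff (q ^ (i : ℕ)) = c i := by
    simp only [P, Polynomial.finsetSum_coeff, Polynomial.coeff_C_mul_X_pow]
    rw [Finset.sum_eq_single i]
    · simp
    · intro b _ hb
      rw [if_neg]
      intro h
      exact hb (Fin.ext (Nat.pow_right_injective hq1 h).symm)
    · simp
  rw [← hcoef, hP, Polynomial.coeff_zero]

lemma rank_add_finrank_ker {K m n : Type*} [Field K] [Fintype n] (A : Matrix m n K) :
    A.rank + Module.finrank K (LinearMap.ker A.mulVecLin) = Fintype.card n := by
  have := LinearMap.finrank_range_add_finrank_ker A.mulVecLin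
  rwa [Module.finrank_fintype_fun_eq_card] at this

/-- Entrywise application of `τ` carries the kernel of `A` bijectively and `τ`-semilinearly onto
the kernel of `A.map τ`. -/
lemma rank_map_ringEquiv {K m n : Type*} [Field K] [Fintype n] (A : Matrix m n K) (τ : K ≃+* K) :
    (A.map τ).rank = A.rank := by
  have hmap : ∀ v : n → K, A.map τ *ᵥ (fun i => τ (v i)) = fun i => τ ((A *ᵥ v) i) := by
    intro v
    ext i
    simp [Matrix.mulVec, dotProduct]
  let E : LinearMap.ker A.mulVecLin ≃+ LinearMap.ker (A.map τ).mulVecLin :=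
    { toFun := fun v => ⟨fun i => τ (v.1 i), by
        have hv : A *ᵥ v.1 = 0 := v.2
        rw [LinearMap.mem_ker, Matrix.mulVecLin_apply, hmap, hv]
        ext; simp⟩
      invFun := fun v => ⟨fun i => τ.symm (v.1 i), by
        have hv : A.map τ *ᵥ v.1 = 0 := v.2
        have h2 := hmap fun i => τ.symm (v.1 i)
        simp only [RingEquiv.apply_symm_apply] at h2
        rw [hv] at h2
        rw [LinearMap.mem_ker, Matrix.mulVecLin_apply]
        ext i
        simpa using (congrFun h2 i).symm⟩
      left_inv := fun v => by ext; simp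
      right_inv := fun v => by ext; simp
      map_add' := fun v w => by ext; simp }
  have hE := rank_eq_of_equiv_equiv (τ : K → K) E τ.bijective (fun r v => by ext; simp [E])
  have hE' : Module.finrank K (LinearMap.ker A.mulVecLin) =
      Module.finrank K (LinearMap.ker (A.map τ).mulVecLin) := by
    simp only [Module.finrank, hE]
  have h1 := rank_add_finrank_ker A
  have h2 := rank_add_finrank_ker (A.map τ)
  omega

theorem relation_between_decoding_matrices
    (Fq K : Type) [Field Fq] [Fintype Fq] [Field K] [Fintype K] [Algebra Fq K]
    (q m n s k : ℕ) (hq : q = Fintype.card Fq) (hm : Module.finrank Fq K = m)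
    (hs : 1 ≤ s) (hk1 : 1 ≤ k) (hkn : k < n) (hnm : n ≤ m)
    (σ : RingAut K) (hσ : ∀ x : K, σ x = x ^ q)
    (g : Fin n → K) (hg : LinearIndependent Fq g)
    (f : Fin s → ℕ → K) (hf : ∀ i j, k ≤ j → f i j = 0)
    (e r : Fin s → Fin n → K)
    (hr : ∀ i j, r i j = qEval q (f i) (g j) + e i j)
    (t τ : ℕ) (ht : rankFq Fq (Matrix.of fun i j => e i j) = t)
    (ht1 : 1 ≤ t) (hτdef : τ = s * (n - k) / (s + 1)) (htτ : t ≤ τ)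
    (h : Fin n → K) (hh : LinearIndependent Fq h)
    -- qvan_{n−k}(h) is a parity-check matrix of Gab[n,k]
    (hpc : moore q (n - k) h * (moore q k g)ᵀ = 0)
    -- syndromes s⁽ⁱ⁾ = r⁽ⁱ⁾ · qvan_{n−k}(h)ᵀ
    (syn : Fin s → ℕ → K)
    (hsyn : ∀ i a, syn i a = ∑ j, r i j * h j ^ q ^ a)
    -- S : vertical stack of the matrices S⁽ⁱ⁾
    (S : Matrix (Fin s × Fin (n - k - t)) (Fin (t + 1)) K)
    (hS : ∀ p c, S p c = (σ ^ ((t : ℤ) - n + k + 1 + ((p.2 : ℕ) : ℤ)))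
      (syn p.1 (n - k - 1 - t - (p.2 : ℕ) + (c : ℕ))))
    -- R_R : vertical stack of qvan_{n−t−1}(g), qvan_{n−k−t}(r⁽¹⁾), …, qvan_{n−k−t}(r⁽ˢ⁾)
    (RR : Matrix (Fin (n - t - 1) ⊕ (Fin s × Fin (n - k - t))) (Fin n) K)
    (hRR : ∀ c j, RR c j = Sum.elim
      (fun l : Fin (n - t - 1) => g j ^ q ^ (l : ℕ))
      (fun p : Fin s × Fin (n - k - t) => r p.1 j ^ q ^ (p.2 : ℕ)) c) :
    S.rank < t ↔ RR.rank < n - 1 := by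
  subst hq
  set q := Fintype.card Fq with hq
  have htlt : t < n - k := by
    have h1 : t * (s + 1) ≤ s * (n - k) := by
      rw [hτdef] at htτ
      exact (Nat.le_div_iff_mul_le (Nat.succ_pos s)).mp htτ
    by_contra! hcon
    have h2 : s * (n - k) ≤ s * t := Nat.mul_le_mul_left s hcon
    nlinarith
  have hσpow : ∀ (d : ℕ) (x : K), (σ ^ d) x = x ^ q ^ d := by
    intro d
    induction d with
    | zero => simp
    | succ d ih =>
      intro x
      rw [pow_succ', RingAut.mul_apply, ih, hσ, ← pow_mul, pow_succ]
  have horth : ∀ a b : ℕ, a < n - k → b < k → ∑ j, h j ^ q ^ a * g j ^ q ^ b = 0 := by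
    intro a b ha hb
    simpa [moore, Matrix.mul_apply] using congrFun (congrFun hpc ⟨a, ha⟩) ⟨b, hb⟩
  -- Raising to `q ^ d` with `d = l - (k - 1)` reduces the exponent of `g` below `k`.
  have horth' : ∀ l b : ℕ, l < n - t - 1 → b ≤ t →
      ∑ j, g j ^ q ^ l * h j ^ q ^ (n - k - t - 1 + b) = 0 := by
    intro l b hl hb
    have h0 := horth (n - k - t - 1 + b - (l - (k - 1))) (l - (l - (k - 1)))
      (by omega) (by omega)
    have h1 := congrArg (σ ^ (l - (k - 1))) h0
    rw [map_sum, map_zero] at h1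
    rw [← h1]
    refine Finset.sum_congr rfl fun j _ => ?_
    rw [map_mul, hσpow, hσpow, ← pow_mul, ← pow_mul, ← pow_add, ← pow_add, mul_comm]
    congr 3 <;> omega
  let G := moore q (n - t - 1) g
  let B : Matrix (Fin (t + 1)) (Fin n) K :=
    moore q (t + 1) fun j => h j ^ q ^ (n - k - t - 1)
  have hGrank : G.rank = n - t - 1 := by
    simpa using (moore_linearIndependent hg (by omega : n - t - 1 ≤ n)).rank_matrix
  have hhpow : LinearIndependent Fq fun j => h j ^ q ^ (n - k - t - 1) := by
    let φ : K →ₐ[Fq] K := (FiniteField.frobeniusAlgHom Fq K) ^ (n - k - t - 1)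
    have hφ : ∀ x, φ x = x ^ q ^ (n - k - t - 1) := by
      intro x
      simp only [φ]
      rw [AlgHom.coe_pow, FiniteField.coe_frobeniusAlgHom, pow_iterate]
    have := hh.map' φ.toLinearMap (LinearMap.ker_eq_bot.mpr φ.toRingHom.injective)
    simpa [Function.comp_def, hφ] using this
  have hBrank : Bᵀ.rank = t + 1 := by
    rw [Matrix.rank_transpose]
    simpa using (moore_linearIndependent hhpow (by omega : t + 1 ≤ n)).rank_matrix
  have hB : ∀ b j, B b j = h j ^ q ^ (n - k - t - 1 + (b : ℕ)) := by
    intro b j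
    simp only [B, moore, Matrix.of_apply]
    rw [← pow_mul, ← pow_add]
  have hGB : G * Bᵀ = 0 := by
    ext l b
    rw [Matrix.mul_apply]
    simp only [Matrix.transpose_apply, hB]
    exact horth' l b l.2 (by have := b.2; omega)
  have hrange : LinearMap.range Bᵀ.mulVecLin = LinearMap.ker G.mulVecLin := by
    refine Submodule.eq_of_le_of_finrank_eq ?_ ?_
    · rw [LinearMap.range_le_ker_iff, ← Matrix.mulVecLin_mul, hGB, Matrix.mulVecLin_zero]
    · have h1 := rank_add_finrank_ker G
      rw [hGrank, Fintype.card_fin] at h1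
      change Bᵀ.rank = _
      omega
  have hinj : Function.Injective Bᵀ.mulVecLin := by
    rw [← LinearMap.ker_eq_bot, ← Submodule.finrank_eq_zero]
    have h1 := rank_add_finrank_ker Bᵀ
    rw [hBrank, Fintype.card_fin] at h1
    omega
  -- In the coordinates given by the rows of `B`, the rows `r^{(i)[a]}` of `R_R`
  -- become `S`, up to the entrywise automorphism `σ ^ (n - k - t - 1)`.
  let R : Matrix (Fin s × Fin (n - k - t)) (Fin n) K :=
    Matrix.of fun p j => r p.1 j ^ q ^ (p.2 : ℕ)
  have hRB : R * Bᵀ = S.map (σ ^ (n - k - t - 1) : RingAut K) := by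
    ext p c
    have hp := p.2.2
    rw [Matrix.mul_apply, Matrix.map_apply, hS, hsyn, ← RingAut.mul_apply, ← zpow_natCast,
      ← _root_.zpow_add]
    rw [show ((n - k - t - 1 : ℕ) : ℤ) + ((t : ℤ) - n + k + 1 + ((p.2 : ℕ) : ℤ))
      = ((p.2 : ℕ) : ℤ) by omega, zpow_natCast, map_sum]
    refine Finset.sum_congr rfl fun j _ => ?_
    rw [map_mul, hσpow, hσpow, Matrix.transpose_apply, hB, ← pow_mul, ← pow_add]
    simp only [R, Matrix.of_apply]
    congr 3
    omega
  have hRRker : ∀ v, RR *ᵥ v = 0 ↔ G *ᵥ v = 0 ∧ R *ᵥ v = 0 := by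
    intro v
    simp only [funext_iff, Sum.forall, Matrix.mulVec, dotProduct, hRR, G, R, moore,
      Matrix.of_apply, Sum.elim_inl, Sum.elim_inr, Pi.zero_apply]
  have hker : LinearMap.ker RR.mulVecLin =
      (LinearMap.ker (R * Bᵀ).mulVecLin).map Bᵀ.mulVecLin := by
    ext v
    simp only [LinearMap.mem_ker, Submodule.mem_map, Matrix.mulVecLin_apply, hRRker]
    constructor
    · rintro ⟨hv, hv'⟩
      have : v ∈ LinearMap.range Bᵀ.mulVecLin := by rw [hrange]; exact hv
      obtain ⟨w, rfl⟩ := this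
      refine ⟨w, ?_, rfl⟩
      rwa [← Matrix.mulVec_mulVec]
    · rintro ⟨w, hw, rfl⟩
      refine ⟨?_, ?_⟩
      · rw [Matrix.mulVec_mulVec, hGB, Matrix.zero_mulVec]
      · rwa [Matrix.mulVec_mulVec]
  have hdim : Module.finrank K (LinearMap.ker RR.mulVecLin) =
      Module.finrank K (LinearMap.ker (R * Bᵀ).mulVecLin) := by
    rw [hker]
    exact (Submodule.equivMapOfInjective _ hinj _).finrank_eq.symm
  have e1 := rank_add_finrank_ker RR
  have e2 := rank_add_finrank_ker (R * Bᵀ)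
  rw [hRB, rank_map_ringEquiv, ← hRB, Fintype.card_fin] at e2
  rw [Fintype.card_fin] at e1
  omega
end

section
/- Connection between the interpolation-based and received-word-based decoders: Let r^(1),…,r^(s) ∈ 𝔽_{q^m}^n, let τ = ⌊(s·n − Σ_{i=1}^s k^(i))/(s+1)⌋, and assume τ + k^(i) ≤ n for all i. Let V be the interpolation solution space for these data, let d_I = dim_{𝔽_{q^m}} V, let (Q^(1),…,Q^(d_I)) be any basis of V, and let Q̄_0 be the d_I×(s+1) matrix over 𝔽_{q^m} whose h-th row is (q^(h)_{0,0}, q^(h)_{1,0}, …, q^(h)_{s,0}), the zeroth coefficients of the components of Q^(h). Let R_R be the matrix over 𝔽_{q^m} obtained by vertically stacking qvan_{n−τ−1}(g), qvan_{n−k^(1)−τ}(r^(1)), …, qvan_{n−k^(s)−τ}(r^(s)). If the rank of Q̄_0 over 𝔽_{q^m} is less than s, then the rank of R_R over 𝔽_{q^m} is less than n−1. -/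
/-- Entrywise application of a bijective ring endomorphism does not lower the rank. -/
lemma rank_le_rank_map {K ι : Type*} [Field K] [Fintype ι] {n : ℕ} (A : Matrix ι (Fin n) K)
    (φ : K →+* K) (hφ : Function.Surjective φ) : A.rank ≤ (A.map φ).rank := by
  obtain ⟨f, hf1, -, hf2⟩ := Submodule.exists_fun_fin_finrank_span_eq K (Set.range A.row)
  have key : LinearIndependent K (fun i => (fun j => φ (f i j)) : _ → Fin n → K) := by
    rw [Fintype.linearIndependent_iff] at hf2 ⊢
    intro a ha i
    choose b hb using fun i => hφ (a i)
    have := hf2 b (by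
      ext j
      apply φ.injective
      have := congrFun ha j
      simpa [Finset.sum_apply, hb] using this) i
    rw [← hb, this, map_zero]
  rw [Matrix.rank_eq_finrank_span_row, Matrix.rank_eq_finrank_span_row]
  have h1 := finrank_span_eq_card key
  rw [Fintype.card_fin] at h1
  rw [← h1]
  apply Submodule.finrank_mono
  apply Submodule.span_mono
  rintro _ ⟨i, rfl⟩
  obtain ⟨l, hl⟩ := hf1 i
  exact ⟨l, funext fun j => congrArg φ (congrFun hl j)⟩

/-- The coefficient sequence `(c, a₀, …, a_{N-1}, 0, 0, …)`. -/
def qCons {K : Type*} [Field K] {N : ℕ} (c : K) (a : Fin N → K) : ℕ → K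
  | 0 => c
  | l + 1 => if h : l < N then a ⟨l, h⟩ else 0

lemma qCons_eq_zero {K : Type*} [Field K] {N : ℕ} (c : K) (a : Fin N → K) (j : ℕ)
    (hj : N < j) : qCons c a j = 0 := by
  obtain ⟨l, rfl⟩ : ∃ l, j = l + 1 := ⟨j - 1, by omega⟩
  simp only [qCons]
  rw [dif_neg (by omega)]

lemma qEval_qCons {K : Type*} [Field K] (q : ℕ) {N : ℕ} (c : K) (a : Fin N → K) (x : K) :
    qEval q (qCons c a) x = c * x + ∑ l, a l * (x ^ q ^ (l : ℕ)) ^ q := by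
  unfold qEval
  rw [finsum_eq_sum_of_support_subset (s := Finset.range (N + 1))]
  · rw [Finset.sum_range_succ', Finset.sum_range, add_comm]
    simp [qCons, pow_succ, pow_mul]
  · intro j hj
    by_contra h
    apply hj
    have : N < j := by
      simp only [Finset.coe_range, Set.mem_Iio] at h
      omega
    simp [qCons_eq_zero c a j this]

/-- The vector of zeroth coefficients of a tuple of polynomials. -/
def zerothCoeff (K : Type*) [Field K] (s : ℕ) :
    ((ℕ → K) × (Fin s → ℕ → K)) →ₗ[K] (Fin (s + 1) → K) where
  toFun Q := Fin.cons (Q.1 0) (fun i => Q.2 i 0)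
  map_add' Q Q' := by ext c; refine Fin.cases ?_ (fun i => ?_) c <;> simp
  map_smul' t Q := by ext c; refine Fin.cases ?_ (fun i => ?_) c <;> simp

/-- If the row space contains the kernel of a map to a space of dimension at most one, then the
rank is at most one less than the number of columns. -/
lemma le_rank_of_ker_le {K X : Type*} [Field K] [AddCommGroup X] [Module K X]
    [FiniteDimensional K X] {d s : ℕ} (A : Matrix (Fin d) (Fin (s + 1)) K)
    (ψ : (Fin (s + 1) → K) →ₗ[K] X) (hX : Module.finrank K X ≤ 1)
    (h : LinearMap.ker ψ ≤ Submodule.span K (Set.range A.row)) : s ≤ A.rank := by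
  rw [Matrix.rank_eq_finrank_span_row]
  have h1 := Submodule.finrank_mono h
  have h2 := LinearMap.finrank_range_add_finrank_ker ψ
  have h3 := (LinearMap.range ψ).finrank_le
  rw [Module.finrank_fin_fun] at h2
  omega

theorem connection_interpolation_and_received_word_decoder
    (Fq K : Type) [Field Fq] [Fintype Fq] [Field K] [Fintype K] [Algebra Fq K]
    (q m n s : ℕ) (hq : q = Fintype.card Fq) (hm : Module.finrank Fq K = m) (hnm : n ≤ m)
    (g : Fin n → K) (hg : LinearIndependent Fq g)
    (k : Fin s → ℕ) (r : Fin s → Fin n → K)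
    (τ : ℕ) (hτdef : τ = (s * n - ∑ i, k i) / (s + 1)) (hτk : ∀ i, τ + k i ≤ n)
    -- `Qs` is a basis of the interpolation solution space `V`, and `dI = dim V`:
    (dI : ℕ) (Qs : Fin dI → (ℕ → K) × (Fin s → ℕ → K))
    (hmem : ∀ h : Fin dI,
      (∀ j : ℕ, (n : ℤ) - τ ≤ (j : ℤ) → (Qs h).1 j = 0) ∧
      (∀ i, ∀ j : ℕ, (n : ℤ) - τ - k i + 1 ≤ (j : ℤ) → (Qs h).2 i j = 0) ∧
      (∀ j, qEval q (Qs h).1 (g j) + ∑ i, qEval q ((Qs h).2 i) (r i j) = 0))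
    (hli : LinearIndependent K Qs)
    (hspan : ∀ (Q0 : ℕ → K) (Q : Fin s → ℕ → K),
      (∀ j : ℕ, (n : ℤ) - τ ≤ (j : ℤ) → Q0 j = 0) →
      (∀ i, ∀ j : ℕ, (n : ℤ) - τ - k i + 1 ≤ (j : ℤ) → Q i j = 0) →
      (∀ j, qEval q Q0 (g j) + ∑ i, qEval q (Q i) (r i j) = 0) →
      (Q0, Q) ∈ Submodule.span K (Set.range Qs))
    -- Q̄₀ : the dI × (s+1) matrix of zeroth coefficients
    (Qbar : Matrix (Fin dI) (Fin (s + 1)) K)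
    (hQbar : ∀ h c, Qbar h c = Fin.cases ((Qs h).1 0) (fun i => (Qs h).2 i 0) c)
    -- R_R : vertical stack of qvan_{n−τ−1}(g), qvan_{n−k⁽¹⁾−τ}(r⁽¹⁾), …
    (RR : Matrix (Fin (n - τ - 1) ⊕ ((i : Fin s) × Fin (n - k i - τ))) (Fin n) K)
    (hRR : ∀ c j, RR c j = Sum.elim
      (fun l : Fin (n - τ - 1) => g j ^ q ^ (l : ℕ))
      (fun p : (i : Fin s) × Fin (n - k i - τ) => r p.1 j ^ q ^ (p.2 : ℕ)) c)
    (hrank : Qbar.rank < s) :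
    RR.rank < n - 1 := by
  classical
  by_contra hcon
  push Not at hcon
  apply absurd hrank
  push Not
  -- A solution of the interpolation problem has its zeroth coefficients in the row space of `Qbar`.
  have hsol : ∀ (Q0 : ℕ → K) (Q : Fin s → ℕ → K),
      (∀ j : ℕ, (n : ℤ) - τ ≤ (j : ℤ) → Q0 j = 0) →
      (∀ i, ∀ j : ℕ, (n : ℤ) - τ - k i + 1 ≤ (j : ℤ) → Q i j = 0) →
      (∀ j, qEval q Q0 (g j) + ∑ i, qEval q (Q i) (r i j) = 0) →
      zerothCoeff K s (Q0, Q) ∈ Submodule.span K (Set.range Qbar.row) := by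
    intro Q0 Q h0 h1 h2
    have h3 := Submodule.mem_map_of_mem (f := zerothCoeff K s) (hspan Q0 Q h0 h1 h2)
    rw [Submodule.map_span, ← Set.range_comp] at h3
    have h4 : (zerothCoeff K s) ∘ Qs = Qbar.row := by
      ext h c
      rw [Matrix.row, hQbar]
      refine Fin.cases ?_ (fun i => ?_) c <;> simp [zerothCoeff]
    rwa [h4] at h3
  rcases Nat.eq_zero_or_pos n with rfl | hn
  · apply le_rank_of_ker_le Qbar (LinearMap.proj (0 : Fin (s + 1))) (by simp)
    intro c hc
    have hc0 : c 0 = 0 := by simpa using hc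
    have := hsol 0 (fun i => qCons (N := 0) (c i.succ) Fin.elim0) (by simp)
      (fun i j hj => qCons_eq_zero _ _ _ (by have := hτk i; omega)) (fun j => j.elim0)
    convert this using 1
    ext i
    refine Fin.cases ?_ (fun i => ?_) i <;> simp [zerothCoeff, qCons, hc0]
  · have hτn : τ < n := by
      rw [hτdef, Nat.div_lt_iff_lt_mul (Nat.succ_pos s)]
      have : n * s.succ = s * n + n := by rw [Nat.succ_eq_add_one]; ring
      omega
    set φ : K →+* K := (FiniteField.frobeniusAlgHom Fq K : K →+* K) with hφ
    have hφq : ∀ x, φ x = x ^ q := by intro x; simp [hφ, hq]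
    have hφs : Function.Surjective φ := Finite.surjective_of_injective φ.injective
    have hr := rank_le_rank_map RR φ hφs
    set L := LinearMap.range (RR.map φ).vecMulLinear with hL
    have hLr : Module.finrank K L = (RR.map φ).rank := by
      rw [Matrix.rank_eq_finrank_span_row, hL, range_vecMulLinear]
    have hquot := L.finrank_quotient_add_finrank
    rw [Module.finrank_fin_fun] at hquot
    let G : Matrix (Fin (s + 1)) (Fin n) K := Matrix.of (Fin.cons g r)
    apply le_rank_of_ker_le Qbar (L.mkQ ∘ₗ G.vecMulLinear) (by omega)
    intro c hc
    have hcL : Matrix.vecMul c G ∈ L := by simpa using hc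
    obtain ⟨a, ha⟩ := hcL
    have := hsol (qCons (c 0) (fun l => -a (Sum.inl l)))
      (fun i => qCons (c i.succ) (fun l => -a (Sum.inr ⟨i, l⟩)))
      (fun j hj => qCons_eq_zero _ _ _ (by omega))
      (fun i j hj => qCons_eq_zero _ _ _ (by have := hτk i; omega)) ?_
    · convert this using 1
      ext i
      refine Fin.cases ?_ (fun i => ?_) i <;> simp [zerothCoeff, qCons]
    · intro j
      have haj := congrFun ha j
      simp only [Matrix.vecMulLinear_apply, Matrix.vecMul, dotProduct, Matrix.map_apply, hφq, hRR,
        Fintype.sum_sum_type, Fintype.sum_sigma, Sum.elim_inl, Sum.elim_inr, Fin.sum_univ_succ,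
        G, Matrix.of_apply, Fin.cons_zero, Fin.cons_succ] at haj
      simp only [qEval_qCons, Finset.sum_add_distrib, neg_mul, Finset.sum_neg_distrib]
      linear_combination -haj
end

section
/- Evaluated matrix of the full q-reverse: Let A = (α_0,…,α_{m−1}) and B = (β_0,…,β_{m−1}) be 𝔽_q-bases of 𝔽_{q^m} with trace-dual bases A⊥ = (α⊥_0,…,α⊥_{m−1}) and B⊥ = (β⊥_0,…,β⊥_{m−1}), i.e., Tr(α_i·α⊥_j) = 1 if i = j and 0 otherwise, and likewise Tr(β_i·β⊥_j) = δ_{ij}. Let p be a linearized polynomial over 𝔽_{q^m} with deg_q p < m, let p̃ be its full q-reverse, and let P ∈ 𝔽_q^{m×m} be the matrix determined by p(α_j) = Σ_{i=0}^{m−1} β_i P_{i,j} for all j. Then p̃(β⊥_j) = Σ_{i=0}^{m−1} α⊥_i P_{j,i} for all j; that is, the matrix of p̃ with respect to the dual bases is the transpose P^T. -/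
/-- The full `q`-reverse of a linearized polynomial `p(x) = ∑_{i<m} p_i x^{q^i}`:
`p̃_i = (p_{(−i) mod m})^{q^i}` for `i < m`. -/
noncomputable def qReverse {K : Type*} [Field K] (q m : ℕ) (p : ℕ → K) : ℕ → K :=
  fun i => if i < m then (p ((m - i) % m)) ^ q ^ i else 0

theorem qEval_eq_sum_range {K : Type*} [Field K] (q m : ℕ) (c : ℕ → K)
    (hc : ∀ i, m ≤ i → c i = 0) (x : K) :
    qEval q c x = ∑ i ∈ Finset.range m, c i * x ^ q ^ i := by
  unfold qEval
  apply finsum_eq_sum_of_support_subset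
  intro i hi
  rw [Finset.coe_range, Set.mem_Iio]
  by_contra h
  exact hi (by simp [hc i (not_lt.mp h)])

theorem trace_pow_card_pow (Fq K : Type*) [Field Fq] [Fintype Fq] [Field K] [Fintype K]
    [Algebra Fq K] (j : ℕ) (z : K) :
    Algebra.trace Fq K (z ^ Fintype.card Fq ^ j) = Algebra.trace Fq K z := by
  induction j with
  | zero => simp
  | succ j ih =>
    rw [pow_succ, pow_mul, ← ih]
    exact Algebra.trace_eq_of_algEquiv
      (FiniteField.frobeniusAlgEquivOfAlgebraic Fq K) (z ^ Fintype.card Fq ^ j)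

/-- The full `q`-reverse is the adjoint of the original linearized polynomial for the trace form. -/
theorem trace_qEval_mul (Fq K : Type*) [Field Fq] [Fintype Fq] [Field K] [Fintype K]
    [Algebra Fq K] (m : ℕ) (hm : Module.finrank Fq K = m)
    (p : ℕ → K) (hp : ∀ i, m ≤ i → p i = 0) (x y : K) :
    Algebra.trace Fq K (qEval (Fintype.card Fq) p x * y) =
      Algebra.trace Fq K (x * qEval (Fintype.card Fq) (qReverse (Fintype.card Fq) m p) y) := by
  have hmpos : 0 < m := hm ▸ Module.finrank_pos
  have hx : x ^ Fintype.card Fq ^ m = x := by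
    rw [← hm, ← Module.card_eq_pow_finrank (K := Fq) (V := K), FiniteField.pow_card]
  have hneg : ∀ i < m, (m - (m - i) % m) % m = i := by
    intro i hi
    rcases Nat.eq_zero_or_pos i with rfl | h0
    · simp
    · rw [Nat.mod_eq_of_lt (by omega : m - i < m), Nat.sub_sub_self hi.le, Nat.mod_eq_of_lt hi]
  rw [qEval_eq_sum_range _ m p hp,
    qEval_eq_sum_range _ m (qReverse _ m p) (fun i hi => by simp [qReverse, not_lt.mpr hi]),
    Finset.sum_mul, Finset.mul_sum, map_sum, map_sum]
  refine Finset.sum_bij' (fun i _ => (m - i) % m) (fun i _ => (m - i) % m)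
    (fun i _ => Finset.mem_range.mpr (Nat.mod_lt _ hmpos))
    (fun i _ => Finset.mem_range.mpr (Nat.mod_lt _ hmpos))
    (fun i hi => hneg i (Finset.mem_range.mp hi))
    (fun i hi => hneg i (Finset.mem_range.mp hi)) ?_
  intro i hi
  have him := Finset.mem_range.mp hi
  have hxx : x ^ Fintype.card Fq ^ (i + (m - i) % m) = x := by
    rcases Nat.eq_zero_or_pos i with rfl | h0
    · simp
    · rw [Nat.mod_eq_of_lt (by omega : m - i < m), Nat.add_sub_cancel' him.le, hx]
  rw [← trace_pow_card_pow Fq K ((m - i) % m) (p i * x ^ Fintype.card Fq ^ i * y),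
    mul_pow, mul_pow, ← pow_mul, ← pow_add, hxx]
  simp only [qReverse, Nat.mod_lt _ hmpos, if_true, hneg i him]
  congr 1
  ring

/-- The right-hand entry of the trace form is determined by its pairings with a basis. -/
theorem eq_of_trace_mul_eq (Fq K : Type*) [Field Fq] [Fintype Fq] [Field K] [Fintype K]
    [Algebra Fq K] (m : ℕ) (hm : Module.finrank Fq K = m) (α : Fin m → K)
    (hα : LinearIndependent Fq α) (u v : K)
    (h : ∀ i, Algebra.trace Fq K (α i * u) = Algebra.trace Fq K (α i * v)) : u = v := by
  have hspan := hα.span_eq_top_of_card_eq_finrank' (by simp [hm])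
  have hlin : (Algebra.traceForm Fq K).flip u = (Algebra.traceForm Fq K).flip v :=
    LinearMap.ext_on_range hspan h
  rw [← sub_eq_zero]
  refine (traceForm_nondegenerate Fq K).2 _ fun w => ?_
  have := LinearMap.congr_fun hlin w
  rw [LinearMap.BilinForm.flip_apply, LinearMap.BilinForm.flip_apply] at this
  rw [map_sub, this, sub_self]

theorem evaluated_matrix_of_q_reverse
    (Fq K : Type) [Field Fq] [Fintype Fq] [Field K] [Fintype K] [Algebra Fq K]
    (q m : ℕ) (hq : q = Fintype.card Fq) (hm : Module.finrank Fq K = m)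
    (α β α' β' : Fin m → K)
    (hα : LinearIndependent Fq α) (hβ : LinearIndependent Fq β)
    -- trace duality : Tr(α_i · α⊥_j) = δ_{ij} and Tr(β_i · β⊥_j) = δ_{ij}
    (hαdual : ∀ i j, Algebra.trace Fq K (α i * α' j) = if i = j then 1 else 0)
    (hβdual : ∀ i j, Algebra.trace Fq K (β i * β' j) = if i = j then 1 else 0)
    (p : ℕ → K) (hp : ∀ i, m ≤ i → p i = 0)
    (P : Matrix (Fin m) (Fin m) Fq)
    (hP : ∀ j, qEval q p (α j) = ∑ i, P i j • β i) :
    ∀ j, qEval q (qReverse q m p) (β' j) = ∑ i, P j i • α' i := by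
  subst hq
  intro j
  refine eq_of_trace_mul_eq Fq K m hm α hα _ _ fun i => ?_
  rw [← trace_qEval_mul Fq K m hm p hp, hP, Finset.sum_mul, Finset.mul_sum, map_sum, map_sum]
  simp [hαdual, hβdual]
end
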